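/- arXiv:0807.1838 — 2 statements merged into one kernel-verified Lean document; each statement's English description precedes it below -/
import Mathlib

section
/- Let J ⊆ I be ideals in ℂ[x] = ℂ[x₁,…,xₙ] with dim_ℂ ℂ[x]/(J:I) < ∞, let {p₁,…,pₛ} = V(J) \ V(I), and let k be a positive integer such that (m_{p₁} ∩ ⋯ ∩ m_{pₛ} ∩ I)ᵏ ⊆ J. Then J:I = (⋂_{i=1}^{s} (J + m_{pᵢ}ᵏ)) ∩ ((J + Iᵏ):I). -/
open MvPolynomial

/-- The zero set `V(S)` of an ideal of `ℂ[x₁,…,xₙ]`. -/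
def zeroSet {n : ℕ} (S : Ideal (MvPolynomial (Fin n) ℂ)) : Set (Fin n → ℂ) :=
  {p | ∀ f ∈ S, eval p f = 0}

/-- The maximal ideal `m_p` generated by `x₁ - p₁, …, xₙ - pₙ`. -/
noncomputable def mIdeal {n : ℕ} (p : Fin n → ℂ) : Ideal (MvPolynomial (Fin n) ℂ) :=
  Ideal.span (Set.range fun i => X i - C (p i))

/-!
If `A` and `B` are coprime ideals, then `(J + A) ∩ (J + B) = J + AB`, and `A : B = A`. Points of
`V(J) \ V(I)` give maximal ideals coprime to each other and to `I`, so with `M = ∏ᵢ m_{pᵢ}ᵏ` the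
hypothesis gives `M Iᵏ ⊆ J`. Hence `J = (J + M) ∩ (J + Iᵏ)`, and taking the quotient by `I`
leaves the first factor `J + M = ⋂ᵢ (J + m_{pᵢ}ᵏ)` unchanged, because it is coprime to `I`.
-/

section CoprimeIdeals

variable {R ι : Type*} [CommSemiring R]

theorem sup_inf_sup_eq_sup_mul_of_isCoprime (J : Ideal R) {A B : Ideal R} (h : IsCoprime A B) :
    (J ⊔ A) ⊓ (J ⊔ B) = J ⊔ A * B := by
  have hsup : IsCoprime (J ⊔ A) (J ⊔ B) :=
    Ideal.isCoprime_iff_codisjoint.mpr (h.codisjoint.mono le_sup_right le_sup_right)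
  apply le_antisymm
  · rw [← Ideal.mul_eq_inf_of_isCoprime hsup, Ideal.sup_mul, Ideal.mul_sup A]
    exact sup_le (le_sup_of_le_left Ideal.mul_le_left)
      (sup_le (le_sup_of_le_left Ideal.mul_le_right) le_sup_right)
  · exact le_inf (sup_le_sup_left Ideal.mul_le_left J) (sup_le_sup_left Ideal.mul_le_right J)

theorem iInf_sup_eq_sup_prod_of_pairwise_isCoprime (J : Ideal R) {A : ι → Ideal R} (s : Finset ι)
    (h : (s : Set ι).Pairwise (Function.onFun IsCoprime A)) :
    ⨅ i ∈ s, (J ⊔ A i) = J ⊔ ∏ i ∈ s, A i := by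
  classical
  induction s using Finset.induction_on with
  | empty => simp
  | insert i s his ih =>
    rw [Finset.coe_insert, Set.pairwise_insert_of_notMem (by simpa using his)] at h
    have hprod : IsCoprime (A i) (∏ j ∈ s, A j) :=
      IsCoprime.prod_right fun j hj => (h.2 j hj).1
    rw [Finset.iInf_insert, Finset.prod_insert his, ih h.1,
      sup_inf_sup_eq_sup_mul_of_isCoprime J hprod]

theorem colon_eq_self_of_isCoprime {A I : Ideal R} (h : IsCoprime A I) :
    A.colon (I : Set R) = A := by
  refine le_antisymm (fun f hf => ?_) Ideal.le_colon
  obtain ⟨x, hx, y, hy, hxy⟩ := h.exists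
  rw [← mul_one f, ← hxy, mul_add]
  exact A.add_mem (A.mul_mem_left f hx) (Submodule.mem_colon.mp hf y hy)

theorem colon_eq_sup_inf_colon_sup {J A B I : Ideal R} (hAB : IsCoprime A B) (hAI : IsCoprime A I)
    (hJ : A * B ≤ J) :
    J.colon (I : Set R) = (J ⊔ A) ⊓ (J ⊔ B).colon (I : Set R) := by
  have hsup : IsCoprime (J ⊔ A) I :=
    Ideal.isCoprime_iff_codisjoint.mpr (hAI.codisjoint.mono_left le_sup_right)
  calc J.colon (I : Set R)
      = ((J ⊔ A) ⊓ (J ⊔ B)).colon (I : Set R) := by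
        rw [sup_inf_sup_eq_sup_mul_of_isCoprime J hAB, sup_eq_left.mpr hJ]
    _ = (J ⊔ A) ⊓ (J ⊔ B).colon (I : Set R) := by
        rw [Submodule.inf_colon, colon_eq_self_of_isCoprime hsup]

theorem stmt_2_general [Finite ι] (J I : Ideal R) (m : ι → Ideal R)
    (hm : Pairwise (Function.onFun IsCoprime m)) (hmI : ∀ i, IsCoprime (m i) I) (k : ℕ)
    (hincl : ((⨅ i, m i) ⊓ I) ^ k ≤ J) :
    J.colon (I : Set R) = (⨅ i, (J + m i ^ k)) ⊓ (J + I ^ k).colon (I : Set R) := by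
  cases nonempty_fintype ι
  have hprod : (∏ i, m i ^ k) * I ^ k ≤ J := by
    rw [Finset.prod_pow, ← mul_pow]
    refine (Ideal.pow_right_mono (Ideal.mul_le_inf.trans ?_) k).trans hincl
    exact inf_le_inf_right I (by simpa using Ideal.prod_le_inf (s := Finset.univ) (f := m))
  have hinf : ⨅ i, (J ⊔ m i ^ k) = J ⊔ ∏ i, m i ^ k := by
    simpa using iInf_sup_eq_sup_prod_of_pairwise_isCoprime J (A := fun i => m i ^ k) Finset.univ
      fun i _ j _ hij => (hm hij).pow
  simp only [Submodule.add_eq_sup]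
  rw [hinf]
  exact colon_eq_sup_inf_colon_sup (IsCoprime.prod_left fun i _ => (hmI i).pow)
    (IsCoprime.prod_left fun i _ => (hmI i).pow_left) hprod

end CoprimeIdeals

theorem ker_eval_eq_span_X_sub_C {R σ : Type*} [CommRing R] (p : σ → R) :
    RingHom.ker (eval p) = Ideal.span (Set.range fun i => (X i - C (p i) : MvPolynomial σ R)) := by
  set K := Ideal.span (Set.range fun i => (X i - C (p i) : MvPolynomial σ R))
  apply le_antisymm
  · have hmk : Ideal.Quotient.mk K = ((Ideal.Quotient.mk K).comp C).comp (eval p) := by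
      refine MvPolynomial.ringHom_ext (fun a => by simp) fun i => ?_
      have hX : Ideal.Quotient.mk K (X i) = Ideal.Quotient.mk K (C (p i)) :=
        Ideal.Quotient.eq.mpr (Ideal.subset_span (Set.mem_range_self i))
      simpa using hX
    intro f hf
    rw [← Ideal.Quotient.eq_zero_iff_mem, hmk, RingHom.comp_apply, RingHom.mem_ker.mp hf, map_zero]
  · rw [Ideal.span_le]
    rintro _ ⟨i, rfl⟩
    simp

section Points

variable {n : ℕ}

theorem mem_mIdeal_iff {p : Fin n → ℂ} {f : MvPolynomial (Fin n) ℂ} :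
    f ∈ mIdeal p ↔ eval p f = 0 := by
  rw [mIdeal, ← ker_eval_eq_span_X_sub_C, RingHom.mem_ker]

instance mIdeal_isMaximal (p : Fin n → ℂ) : (mIdeal p).IsMaximal := by
  rw [mIdeal, ← ker_eval_eq_span_X_sub_C]
  exact RingHom.ker_isMaximal_of_surjective (eval p) fun a => ⟨C a, eval_C a⟩

theorem mIdeal_injective : Function.Injective (mIdeal (n := n)) := by
  intro p q hpq
  funext i
  have hX : X i - C (q i) ∈ mIdeal p := hpq ▸ Ideal.subset_span (Set.mem_range_self i)
  simpa [sub_eq_zero] using mem_mIdeal_iff.mp hX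

theorem mem_zeroSet_iff_le_mIdeal {p : Fin n → ℂ} {I : Ideal (MvPolynomial (Fin n) ℂ)} :
    p ∈ zeroSet I ↔ I ≤ mIdeal p :=
  forall₂_congr fun _ _ => mem_mIdeal_iff.symm

theorem isCoprime_mIdeal_of_notMem_zeroSet {p : Fin n → ℂ} {I : Ideal (MvPolynomial (Fin n) ℂ)}
    (hp : p ∉ zeroSet I) : IsCoprime (mIdeal p) I := by
  rw [mem_zeroSet_iff_le_mIdeal] at hp
  exact Ideal.isCoprime_iff_codisjoint.mpr
    ((mIdeal_isMaximal p).out.not_le_iff_codisjoint.mp hp)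

end Points

/-- Lemma 3: if `(m_{p₁} ∩ ⋯ ∩ m_{pₛ} ∩ I)ᵏ ⊆ J` then
`J:I = (⋂ᵢ (J + m_{pᵢ}ᵏ)) ∩ ((J + Iᵏ):I)`. -/
theorem stmt_2 {n : ℕ} (J I : Ideal (MvPolynomial (Fin n) ℂ)) (hJI : J ≤ I)
    (hfin : FiniteDimensional ℂ (MvPolynomial (Fin n) ℂ ⧸ J.colon I))
    (s : ℕ) (p : Fin s → (Fin n → ℂ)) (hinj : Function.Injective p)
    (hrange : Set.range p = zeroSet J \ zeroSet I)
    (k : ℕ) (hk : 0 < k)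
    (hincl : ((⨅ i : Fin s, mIdeal (p i)) ⊓ I) ^ k ≤ J) :
    J.colon I = (⨅ i : Fin s, (J + mIdeal (p i) ^ k)) ⊓ ((J + I ^ k).colon I) := by
  have hp (i : Fin s) : p i ∉ zeroSet I := (hrange ▸ Set.mem_range_self i).2
  exact stmt_2_general J I (fun i => mIdeal (p i))
    (fun _ _ hij => Ideal.isCoprime_of_isMaximal ((mIdeal_injective.comp hinj).ne hij))
    (fun i => isCoprime_mIdeal_of_notMem_zeroSet (hp i)) k hincl
end

section
/- Let J ⊆ I be ideals in ℂ[x] = ℂ[x₁,…,xₙ] with dim_ℂ ℂ[x]/(J:I) < ∞ and (J:I) + I = ℂ[x], and let {p₁,…,pₛ} = V(J) \ V(I). Then for all sufficiently large positive integers k, the natural map induces a ℂ-algebra isomorphism ℂ[x]/(J:I) ≅ ℂ[x]/(J + m_{p₁}ᵏ) × ⋯ × ℂ[x]/(J + m_{pₛ}ᵏ). -/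
open MvPolynomial

/-!
Write `Q = J : I`. Since `Q + I = ⊤` and `Q * I ≤ J`, the zero set of `Q` is `V(J) \ V(I)`, so by
the Nullstellensatz `√Q` is the intersection of the maximal ideals `mᵢ` of the points `pᵢ`. Some
power of this intersection lies in `Q`, which gives `⨅ i, (Q + mᵢ ^ k) = Q` for large `k`, and the
Chinese remainder theorem identifies `ℂ[x] / Q` with the product of the `ℂ[x] / (Q + mᵢ ^ k)`.
Finally `Q ^ k + I = ⊤`, so `Q = Q * (Q ^ k + I) ≤ mᵢ ^ k + J`, and hence
`Q + mᵢ ^ k = J + mᵢ ^ k`.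
-/

open Filter Function

section CommRing

variable {R ι : Type*} [CommRing R]

theorem prod_sup_le_sup_prod (Q : Ideal R) (M : ι → Ideal R) (t : Finset ι) :
    ∏ i ∈ t, (Q ⊔ M i) ≤ Q ⊔ ∏ i ∈ t, M i := by
  rw [← Ideal.comap_map_quotientMk, ← Ideal.map_le_iff_le_comap]
  simp only [← Ideal.mapHom_apply, map_prod]
  simp [Ideal.map_sup]

theorem pairwise_isCoprime_sup_pow {M : ι → Ideal R} (hM : Pairwise (IsCoprime on M))
    (Q : Ideal R) (k : ℕ) : Pairwise (IsCoprime on fun i => Q ⊔ M i ^ k) := fun _ _ hij =>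
  Ideal.isCoprime_iff_codisjoint.mpr <|
    (Ideal.isCoprime_iff_codisjoint.mp (hM hij).pow).mono le_sup_right le_sup_right

theorem eventually_iInf_sup_pow_eq_self [IsNoetherianRing R] [Finite ι] {Q : Ideal R}
    {M : ι → Ideal R} (hM : Pairwise (IsCoprime on M)) (hrad : ⨅ i, M i = Q.radical) :
    ∀ᶠ k in atTop, ⨅ i, (Q ⊔ M i ^ k) = Q := by
  cases nonempty_fintype ι
  obtain ⟨N, hN⟩ := Q.exists_radical_pow_le_of_fg (IsNoetherian.noetherian _)
  filter_upwards [eventually_ge_atTop N] with k hk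
  refine le_antisymm ?_ (le_iInf fun _ => le_sup_left)
  have hprod : ∏ i, M i ≤ Q.radical :=
    hrad ▸ le_iInf fun i => Ideal.prod_le_inf.trans (Finset.inf_le (Finset.mem_univ i))
  have hpow : (∏ i, M i) ^ k ≤ Q :=
    (Ideal.pow_right_mono hprod k).trans ((Ideal.pow_le_pow_right hk).trans hN)
  calc ⨅ i, (Q ⊔ M i ^ k) = ∏ i, (Q ⊔ M i ^ k) := by
        simpa using (Ideal.prod_eq_iInf_of_pairwise_isCoprime (s := Finset.univ)
          ((pairwise_isCoprime_sup_pow hM Q k).set_pairwise _)).symm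
    _ ≤ Q ⊔ ∏ i, M i ^ k := prod_sup_le_sup_prod Q _ _
    _ = Q ⊔ (∏ i, M i) ^ k := by rw [Finset.prod_pow]
    _ ≤ Q := sup_le le_rfl hpow

theorem colon_mul_le (J I : Ideal R) : J.colon I * I ≤ J :=
  Ideal.mul_le.mpr fun _ hr _ hs => Submodule.mem_colon.mp hr _ hs

theorem colon_sup_pow_eq_sup_pow {J I m : Ideal R} (hsup : J.colon I ⊔ I = ⊤)
    (hm : J.colon I ≤ m) (k : ℕ) : J.colon I ⊔ m ^ k = J ⊔ m ^ k := by
  refine le_antisymm (sup_le ?_ le_sup_right) (sup_le_sup_right Ideal.le_colon _)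
  calc J.colon I = J.colon I * (J.colon I ^ k ⊔ I) := by
        rw [Ideal.pow_sup_eq_top hsup, Ideal.mul_top]
    _ = J.colon I * I ⊔ J.colon I * J.colon I ^ k := by rw [Ideal.mul_sup, sup_comm]
    _ ≤ J ⊔ m ^ k :=
      sup_le_sup (colon_mul_le J I) (Ideal.mul_le_right.trans (Ideal.pow_right_mono hm k))

theorem exists_quotient_algEquiv_pi_of_iInf_eq (A : Type*) [CommSemiring A] [Algebra A R]
    [Finite ι] {Q : Ideal R} {L : ι → Ideal R} (hL : Pairwise (IsCoprime on L))
    (hQ : ⨅ i, L i = Q) :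
    ∃ e : (R ⧸ Q) ≃ₐ[A] ∀ i, R ⧸ L i,
      ∀ f : R, e (Ideal.Quotient.mk Q f) = fun i => Ideal.Quotient.mk (L i) f := by
  subst hQ
  exact ⟨.ofRingEquiv (f := Ideal.quotientInfRingEquivPiQuotient L hL) fun _ => rfl, fun _ => rfl⟩

theorem eventually_exists_quotient_colon_algEquiv_pi (A : Type*) [CommSemiring A] [Algebra A R]
    [IsNoetherianRing R] [Finite ι] {J I : Ideal R} {M : ι → Ideal R}
    (hsup : J.colon I ⊔ I = ⊤) (hM : Pairwise (IsCoprime on M))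
    (hrad : ⨅ i, M i = (J.colon I).radical) :
    ∀ᶠ k in atTop, ∃ e : (R ⧸ J.colon I) ≃ₐ[A] ∀ i, R ⧸ (J ⊔ M i ^ k),
      ∀ f : R, e (Ideal.Quotient.mk (J.colon I) f) =
        fun i => Ideal.Quotient.mk (J ⊔ M i ^ k) f := by
  filter_upwards [eventually_iInf_sup_pow_eq_self hM hrad] with k hk
  have hle (i : ι) : J.colon I ≤ M i := Ideal.le_radical.trans (hrad.ge.trans (iInf_le M i))
  simp only [colon_sup_pow_eq_sup_pow hsup (hle _)] at hk
  exact exists_quotient_algEquiv_pi_of_iInf_eq A (pairwise_isCoprime_sup_pow hM J k) hk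

end CommRing

section MvPolynomial

variable {σ F K : Type*} [Field F] [Field K] [Algebra F K]

theorem vanishingIdeal_singleton_eq_span (x : σ → K) :
    vanishingIdeal K {x} = Ideal.span (Set.range fun i => X i - C (x i)) := by
  refine le_antisymm (fun f hf => ?_) (Ideal.span_le.mpr ?_)
  · set m : Ideal (MvPolynomial σ K) := Ideal.span (Set.range fun i => X i - C (x i))
    -- Modulo `m` every variable, hence every polynomial, is congruent to its value at `x`.
    have hmk : Ideal.Quotient.mk m = ((Ideal.Quotient.mk m).comp C).comp (eval x) :=
      ringHom_ext (by simp) fun i => by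
        simpa using (Ideal.Quotient.eq (I := m)).mpr (Ideal.subset_span (Set.mem_range_self i))
    have hf' : eval x f = 0 := by simpa using hf
    rw [← Ideal.Quotient.eq_zero_iff_mem, hmk]
    simp [hf']
  · rintro _ ⟨i, rfl⟩
    simp

theorem vanishingIdeal_singleton_injective :
    Injective fun x : σ → K => vanishingIdeal K {x} := by
  intro x y hxy
  funext i
  have hx : X i - C (x i) ∈ vanishingIdeal K {x} := by simp
  rw [show vanishingIdeal K {x} = vanishingIdeal K {y} from hxy] at hx
  simpa [sub_eq_zero, eq_comm] using hx

theorem pairwise_isCoprime_vanishingIdeal_singleton {ι : Type*} {p : ι → σ → K}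
    (hp : Injective p) : Pairwise (IsCoprime on fun i => vanishingIdeal K {p i}) :=
  fun _ _ hij => Ideal.isCoprime_of_isMaximal (vanishingIdeal_singleton_injective.ne (hp.ne hij))

theorem iInf_vanishingIdeal_singleton {ι : Sort*} (p : ι → σ → K) :
    ⨅ i, vanishingIdeal F {p i} = vanishingIdeal F (Set.range p) := by
  ext f
  simp

theorem zeroLocus_sup (I J : Ideal (MvPolynomial σ F)) :
    zeroLocus K (I ⊔ J) = zeroLocus K I ∩ zeroLocus K J :=
  zeroLocus_vanishingIdeal_galoisConnection.l_sup

theorem zeroLocus_sdiff_subset_zeroLocus_colon (J I : Ideal (MvPolynomial σ F)) :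
    zeroLocus K J \ zeroLocus K I ⊆ zeroLocus K (J.colon I) := by
  rintro x ⟨hxJ, hxI⟩ q hq
  simp only [mem_zeroLocus_iff, not_forall] at hxI
  obtain ⟨f, hf, hfx⟩ := hxI
  have hqf : aeval x q * aeval x f = 0 := by
    simpa using hxJ _ (Submodule.mem_colon.mp hq f hf)
  exact (mul_eq_zero.mp hqf).resolve_right hfx

theorem zeroLocus_colon_of_sup_eq_top {J I : Ideal (MvPolynomial σ F)}
    (hsup : J.colon I ⊔ I = ⊤) :
    zeroLocus K (J.colon I) = zeroLocus K J \ zeroLocus K I := by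
  refine (Set.subset_sdiff.mpr ⟨zeroLocus_anti_mono Ideal.le_colon, ?_⟩).antisymm
    (zeroLocus_sdiff_subset_zeroLocus_colon J I)
  rw [Set.disjoint_iff_inter_eq_empty, ← zeroLocus_sup, hsup, zeroLocus_top, Set.bot_eq_empty]

theorem stmt_7_general {ι : Type*} [Finite σ] [IsAlgClosed K] [Finite ι]
    {J I : Ideal (MvPolynomial σ K)} (hsup : J.colon I ⊔ I = ⊤) {p : ι → σ → K}
    (hp : Injective p) (hrange : Set.range p = zeroLocus K J \ zeroLocus K I) :
    ∀ᶠ k in atTop,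
      ∃ e : (MvPolynomial σ K ⧸ J.colon I) ≃ₐ[K]
          ∀ i, MvPolynomial σ K ⧸ (J ⊔ Ideal.span (Set.range fun j => X j - C (p i j)) ^ k),
        ∀ f, e (Ideal.Quotient.mk (J.colon I) f) = fun i => Ideal.Quotient.mk _ f := by
  refine eventually_exists_quotient_colon_algEquiv_pi K hsup ?_ ?_ <;>
    simp only [← vanishingIdeal_singleton_eq_span]
  · exact pairwise_isCoprime_vanishingIdeal_singleton hp
  · rw [iInf_vanishingIdeal_singleton, hrange, ← zeroLocus_colon_of_sup_eq_top hsup,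
      vanishingIdeal_zeroLocus_eq_radical]

end MvPolynomial

/-- Proposition 8: if `(J:I) + I = ℂ[x]` then for all `k` large enough the
natural map induces a `ℂ`-algebra isomorphism
`ℂ[x]/(J:I) ≅ ∏ᵢ ℂ[x]/(J + m_{pᵢ}ᵏ)`. -/
theorem stmt_7 {n : ℕ} (J I : Ideal (MvPolynomial (Fin n) ℂ)) (hJI : J ≤ I)
    (hfin : FiniteDimensional ℂ (MvPolynomial (Fin n) ℂ ⧸ J.colon I))
    (hsum : J.colon I + I = ⊤)
    (s : ℕ) (p : Fin s → (Fin n → ℂ)) (hinj : Function.Injective p)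
    (hrange : Set.range p = zeroSet J \ zeroSet I) :
    ∃ K : ℕ, 0 < K ∧ ∀ k : ℕ, K ≤ k →
      ∃ e : (MvPolynomial (Fin n) ℂ ⧸ J.colon I) ≃ₐ[ℂ]
          (∀ i : Fin s, MvPolynomial (Fin n) ℂ ⧸ (J + mIdeal (p i) ^ k)),
        ∀ f : MvPolynomial (Fin n) ℂ,
          e (Ideal.Quotient.mk (J.colon I) f) =
            fun i => Ideal.Quotient.mk (J + mIdeal (p i) ^ k) f := by
  obtain ⟨N, hN⟩ := eventually_atTop.mp (stmt_7_general hsum hinj hrange)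
  exact ⟨N + 1, N.succ_pos, fun k hk => hN k (Nat.le_of_succ_le hk)⟩
end
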